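/- For every n-qudit state ρ: MG(ρ) = 0 if and only if ρ is a minimal stabilizer-projection state. -/

import Mathlib

open scoped BigOperators ComplexOrder Classical ENNReal
open Matrix

namespace PaperQI

/-- The computational-basis index set `ℤ_d^n` for an `n`-qudit system. -/
abbrev QV (d n : ℕ) := Fin n → ZMod d

/-- Matrices (linear operators) on the `n`-qudit Hilbert space `(ℂ^d)^{⊗ n}`,
written in the computational basis indexed by `ℤ_d^n`. -/
abbrev Mat (d n : ℕ) := Matrix (QV d n) (QV d n) ℂ

/-- The character `ξ^z = exp(2πi z/d)` for `z ∈ ℤ_d`. -/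
noncomputable def ch (d : ℕ) (z : ZMod d) : ℂ :=
  Complex.exp (2 * Real.pi * Complex.I * (z.val : ℂ) / (d : ℂ))

/-- Dot product on `ℤ_d^n`. -/
def qdot {d n : ℕ} (p k : QV d n) : ZMod d := ∑ i, p i * k i

/-- The `n`-qudit Weyl operator `w(p,q) = ⊗_i ξ^{-2⁻¹ p_i q_i} Z^{p_i} X^{q_i}`
(for odd prime `d`).  Its matrix entries are
`w(p,q)[k+q, k] = ξ^{p·k + 2⁻¹ p·q}`. -/
noncomputable def weyl (d n : ℕ) [Fact (Nat.Prime d)] (p q : QV d n) : Mat d n :=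
  Matrix.of fun k' k =>
    if k' = k + q then ch d (qdot p k + (2 : ZMod d)⁻¹ * qdot p q) else 0

/-- `ρ` is an `n`-qudit state: positive semidefinite with trace one. -/
def IsState (d n : ℕ) [Fact (Nat.Prime d)] (ρ : Mat d n) : Prop :=
  ρ.PosSemidef ∧ ρ.trace = 1

/-- The characteristic function `Ξ_ρ(p,q) = Tr[ρ w(-p,-q)]`. -/
noncomputable def xi (d n : ℕ) [Fact (Nat.Prime d)] (ρ : Mat d n)
    (pq : QV d n × QV d n) : ℂ :=
  (ρ * weyl d n (-pq.1) (-pq.2)).trace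

/-- The mean state `M(ρ) = d^{-n} ∑_{|Ξ_ρ(p,q)| = 1} Ξ_ρ(p,q) w(p,q)`. -/
noncomputable def meanState (d n : ℕ) [Fact (Nat.Prime d)] (ρ : Mat d n) : Mat d n :=
  ((d : ℂ) ^ n)⁻¹ •
    ∑ pq : QV d n × QV d n,
      if ‖xi d n ρ pq‖ = 1 then xi d n ρ pq • weyl d n pq.1 pq.2 else 0

/-- `ρ` is a minimal stabilizer-projection state (MSPS): for some `r ≤ n` there are
mutually commuting Weyl operators `w(p_i,q_i)`, `i = 1,…,r`, whose labels generate a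
subgroup of `V^n` of order `d^r`, and phases `x ∈ ℤ_d^r`, such that
`ρ = d^{-(n-r)} ∏_i ( (1/d) ∑_{k ∈ ℤ_d} (ξ^{x_i} w(p_i,q_i))^k )`. -/
noncomputable def IsMSPS (d n : ℕ) [Fact (Nat.Prime d)] (ρ : Mat d n) : Prop :=
  ∃ r : ℕ, r ≤ n ∧
    ∃ (p q : Fin r → QV d n) (x : Fin r → ZMod d),
      (∀ i j, Commute (weyl d n (p i) (q i)) (weyl d n (p j) (q j))) ∧
      Nat.card (AddSubgroup.closure (Set.range fun i => (p i, q i)) :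
        AddSubgroup (QV d n × QV d n)) = d ^ r ∧
      ρ = ((d : ℂ) ^ (n - r))⁻¹ •
        (List.ofFn fun i =>
          (d : ℂ)⁻¹ • ∑ k : ZMod d, (ch d (x i) • weyl d n (p i) (q i)) ^ k.val).prod

/-- The magic gap `MG(ρ) = 1 - max{|Ξ_ρ(p,q)| : Ξ_ρ(p,q) ≠ 0, |Ξ_ρ(p,q)| ≠ 1}`,
and `MG(ρ) = 0` if this set is empty. -/
noncomputable def magicGap (d n : ℕ) [Fact (Nat.Prime d)] (ρ : Mat d n) : ℝ :=
  let s : Finset ℝ :=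
    (Finset.univ.filter fun pq : QV d n × QV d n =>
      xi d n ρ pq ≠ 0 ∧ ‖xi d n ρ pq‖ ≠ 1).image
      fun pq => ‖xi d n ρ pq‖
  if h : s.Nonempty then 1 - s.max' h else 0

/-- Von Neumann entropy `H(ρ) = -∑ λ_i log λ_i` (natural log, eigenvalues of `ρ`),
with the convention `0 log 0 = 0`; junk value `0` on non-Hermitian matrices. -/
noncomputable def vnEnt {d n : ℕ} [Fact (Nat.Prime d)] (ρ : Mat d n) : ℝ :=
  if h : ρ.IsHermitian then -∑ i, h.eigenvalues i * Real.log (h.eigenvalues i) else 0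

/-- Rényi entropy `H_α` for `α ∈ [0,∞]`:  `H_0 = log rank`, `H_1 = H` (von Neumann),
`H_∞ = -log λ_max`, and `H_α = (1-α)⁻¹ log ∑ λ_i^α` otherwise. -/
noncomputable def renyiEnt {d n : ℕ} [Fact (Nat.Prime d)] (α : ℝ≥0∞) (ρ : Mat d n) : ℝ :=
  if h : ρ.IsHermitian then
    if α = 0 then Real.log (ρ.rank : ℝ)
    else if α = 1 then -∑ i, h.eigenvalues i * Real.log (h.eigenvalues i)
    else if α = ⊤ then -Real.log (⨆ i, h.eigenvalues i)
    else (1 - α.toReal)⁻¹ * Real.log (∑ i, h.eigenvalues i ^ α.toReal)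
  else 0

/-- Matrix logarithm on the support: `log ρ = U diag(log λ_i) U†` via the spectral
decomposition, with `log 0 = 0` on the kernel; junk value `0` off Hermitian matrices. -/
noncomputable def matLog {d n : ℕ} [Fact (Nat.Prime d)] (ρ : Mat d n) : Mat d n :=
  if h : ρ.IsHermitian then
    (h.eigenvectorUnitary : Mat d n) *
      Matrix.diagonal (fun i => (Real.log (h.eigenvalues i) : ℂ)) *
      star (h.eigenvectorUnitary : Mat d n)
  else 0

/-- Matrix real power on the support: `ρ^t = U diag(λ_i^t) U†`, with `0^t = 0` on the
kernel (for `t ≠ 0`); junk value `0` off Hermitian matrices. -/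
noncomputable def matRpow {d n : ℕ} [Fact (Nat.Prime d)] (ρ : Mat d n) (t : ℝ) : Mat d n :=
  if h : ρ.IsHermitian then
    (h.eigenvectorUnitary : Mat d n) *
      Matrix.diagonal (fun i => ((h.eigenvalues i ^ t : ℝ) : ℂ)) *
      star (h.eigenvectorUnitary : Mat d n)
  else 0

/-- Support inclusion `supp ρ ⊆ supp σ`, expressed as `ker σ ⊆ ker ρ`
(the correct notion for positive semidefinite matrices). -/
def suppLE {d n : ℕ} [Fact (Nat.Prime d)] (ρ σ : Mat d n) : Prop :=
  ∀ v : QV d n → ℂ, σ.mulVec v = 0 → ρ.mulVec v = 0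

/-- Relative entropy `D(ρ‖σ) = Tr[ρ(log ρ - log σ)]` when `supp ρ ⊆ supp σ`, else `+∞`. -/
noncomputable def relEnt {d n : ℕ} [Fact (Nat.Prime d)] (ρ σ : Mat d n) : EReal :=
  if suppLE ρ σ then (((ρ * (matLog ρ - matLog σ)).trace.re : ℝ) : EReal) else ⊤

/-- Sandwiched Rényi relative entropy
`D_α(ρ‖σ) = (α-1)⁻¹ log Tr[(σ^{(1-α)/(2α)} ρ σ^{(1-α)/(2α)})^α]` for `α ≠ 1`
(with `+∞` when `supp ρ ⊄ supp σ`), and `D_1 = D` the relative entropy. -/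
noncomputable def sandRenyi {d n : ℕ} [Fact (Nat.Prime d)] (α : ℝ) (ρ σ : Mat d n) :
    EReal :=
  if α = 1 then relEnt ρ σ
  else if suppLE ρ σ then
    let x : ℝ := (α - 1)⁻¹ * Real.log
      ((matRpow (matRpow σ ((1 - α) / (2 * α)) * ρ * matRpow σ ((1 - α) / (2 * α)))
        α).trace.re)
    (x : EReal)
  else ⊤

/-- The key unitary `U|i,j⟩ = |N g₁₁ i - N g₁₀ j, -N g₀₁ i + N g₀₀ j⟩`,
where `N = (det G)⁻¹` in `ℤ_d`. -/
noncomputable def convU (d n : ℕ) [Fact (Nat.Prime d)] (g00 g01 g10 g11 : ZMod d) :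
    Matrix (QV d n × QV d n) (QV d n × QV d n) ℂ :=
  Matrix.of fun kl ij =>
    if kl = ((fun a => (g00 * g11 - g01 * g10)⁻¹ * g11 * ij.1 a
                      - (g00 * g11 - g01 * g10)⁻¹ * g10 * ij.2 a : QV d n),
             (fun a => -((g00 * g11 - g01 * g10)⁻¹ * g01) * ij.1 a
                      + (g00 * g11 - g01 * g10)⁻¹ * g00 * ij.2 a : QV d n))
    then 1 else 0

/-- Tensor (Kronecker) product of two `n`-qudit operators, on the doubled system. -/
def kron {d n : ℕ} (ρ σ : Mat d n) : Matrix (QV d n × QV d n) (QV d n × QV d n) ℂ :=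
  Matrix.of fun ij kl => ρ ij.1 kl.1 * σ ij.2 kl.2

/-- Partial trace over the second `n`-qudit factor. -/
noncomputable def ptrB {d n : ℕ} [Fact (Nat.Prime d)]
    (M : Matrix (QV d n × QV d n) (QV d n × QV d n) ℂ) : Mat d n :=
  Matrix.of fun i i' => ∑ j : QV d n, M (i, j) (i', j)

/-- The convolution `ρ ⊠ σ = Tr_B[U (ρ ⊗ σ) U†]` with parameter matrix
`G = [g₀₀, g₀₁; g₁₀, g₁₁]`. -/
noncomputable def conv (d n : ℕ) [Fact (Nat.Prime d)] (g00 g01 g10 g11 : ZMod d)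
    (ρ σ : Mat d n) : Mat d n :=
  ptrB (convU d n g00 g01 g10 g11 * kron ρ σ * (convU d n g00 g01 g10 g11)ᴴ)

/-- The beam-splitter unitary `U_{s,t}|i,j⟩ = |s i + t j, t i - s j⟩`. -/
noncomputable def bsU (d n : ℕ) [Fact (Nat.Prime d)] (s t : ZMod d) :
    Matrix (QV d n × QV d n) (QV d n × QV d n) ℂ :=
  Matrix.of fun kl ij =>
    if kl = ((fun a => s * ij.1 a + t * ij.2 a : QV d n),
             (fun a => t * ij.1 a - s * ij.2 a : QV d n))
    then 1 else 0

/-- The beam-splitter convolution `ρ ⊠_{s,t} σ = Tr_B[U_{s,t} (ρ ⊗ σ) U_{s,t}†]`. -/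
noncomputable def bsConv (d n : ℕ) [Fact (Nat.Prime d)] (s t : ZMod d)
    (ρ σ : Mat d n) : Mat d n :=
  ptrB (bsU d n s t * kron ρ σ * (bsU d n s t)ᴴ)

/-- Iterated self-convolution: `⊠^0 ρ = ρ` and `⊠^{N+1} ρ = (⊠^N ρ) ⊠ ρ`. -/
noncomputable def bsIter (d n : ℕ) [Fact (Nat.Prime d)] (s t : ZMod d) :
    ℕ → Mat d n → Mat d n
  | 0, ρ => ρ
  | N + 1, ρ => bsConv d n s t (bsIter d n s t N ρ) ρ

/-- `ρ` is the pure stabilizer state `|ψ⟩⟨ψ|` with stabilizer label group `S ⊆ V^n`: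
`S` has order `d^n` and `ψ` is a common eigenvector of all `w(p,q)`, `(p,q) ∈ S`. -/
noncomputable def IsPureStabilizerWithGroup (d n : ℕ) [Fact (Nat.Prime d)]
    (ρ : Mat d n) (S : AddSubgroup (QV d n × QV d n)) : Prop :=
  Nat.card S = d ^ n ∧
    ∃ ψ : QV d n → ℂ, ψ ≠ 0 ∧
      ρ = Matrix.of (fun a b => ψ a * starRingEnd ℂ (ψ b)) ∧
      ∀ pq ∈ S, ∃ c : ℂ, (weyl d n pq.1 pq.2).mulVec ψ = c • ψ

/-- `ρ` is a pure stabilizer state. -/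
noncomputable def IsPureStabilizer (d n : ℕ) [Fact (Nat.Prime d)] (ρ : Mat d n) : Prop :=
  ∃ S : AddSubgroup (QV d n × QV d n), IsPureStabilizerWithGroup d n ρ S

/-- `ρ` is a stabilizer state: a convex combination of pure stabilizer states. -/
noncomputable def IsStabilizerState (d n : ℕ) [Fact (Nat.Prime d)] (ρ : Mat d n) : Prop :=
  ∃ (m : ℕ) (p : Fin m → ℝ) (τ : Fin m → Mat d n),
    (∀ i, 0 ≤ p i) ∧ ∑ i, p i = 1 ∧ (∀ i, IsPureStabilizer d n (τ i)) ∧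
    ρ = ∑ i, (p i : ℂ) • τ i

/-- `U` is a Clifford unitary: a unitary mapping each Weyl operator, under conjugation,
to a complex phase times a Weyl operator. -/
noncomputable def IsClifford (d n : ℕ) [Fact (Nat.Prime d)] (U : Mat d n) : Prop :=
  U ∈ Matrix.unitaryGroup (QV d n) ℂ ∧
    ∀ pq : QV d n × QV d n, ∃ (c : ℂ) (pq' : QV d n × QV d n),
      ‖c‖ = 1 ∧ U * weyl d n pq.1 pq.2 * Uᴴ = c • weyl d n pq'.1 pq'.2

/-- The divergence-based quantum Fisher information `J(ρ; H) = Tr[ρ [H,[H, log ρ]]]`. -/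
noncomputable def fisherJ {d n : ℕ} [Fact (Nat.Prime d)] (ρ H : Mat d n) : ℝ :=
  (ρ * (H * (H * matLog ρ - matLog ρ * H) - (H * matLog ρ - matLog ρ * H) * H)).trace.re

/-- Embed a single-qudit operator at site `k` of an `n`-qudit system
(tensored with the identity elsewhere). -/
noncomputable def embedAt (d n : ℕ) (k : Fin n) (M : Matrix (ZMod d) (ZMod d) ℂ) :
    Mat d n :=
  Matrix.of fun v w => if ∀ i, i ≠ k → v i = w i then M (v k) (w k) else 0

/-- The rank-one projection `H_j^Z = |j⟩⟨j|` onto the eigenvector of `Z`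
with eigenvalue `ξ^j`. -/
noncomputable def projZ (d : ℕ) (j : ZMod d) : Matrix (ZMod d) (ZMod d) ℂ :=
  Matrix.of fun a b => if a = j ∧ b = j then 1 else 0

/-- The rank-one projection `H_j^X` onto the eigenvector of `X` with eigenvalue `ξ^j`;
its entries are `(H_j^X)_{a b} = d⁻¹ ξ^{j(b-a)}`. -/
noncomputable def projX (d : ℕ) (j : ZMod d) : Matrix (ZMod d) (ZMod d) ℂ :=
  Matrix.of fun a b => (d : ℂ)⁻¹ * ch d (j * (b - a))

/-- Total Fisher information
`J(ρ) = ∑_{k=1}^n ∑_{j ∈ ℤ_d} J(ρ; H_j^{X_k}) + J(ρ; H_j^{Z_k})`. -/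
noncomputable def fisherTotal (d n : ℕ) [Fact (Nat.Prime d)] (ρ : Mat d n) : ℝ :=
  ∑ k : Fin n, ∑ j : ZMod d,
    (fisherJ ρ (embedAt d n k (projX d j)) + fisherJ ρ (embedAt d n k (projZ d j)))

/-- Holevo capacity of a channel `E`:
`χ(E) = sup H(∑ p_i E(ρ_i)) - ∑ p_i H(E(ρ_i))` over finite ensembles of states. -/
noncomputable def holevoCap (d n : ℕ) [Fact (Nat.Prime d)] (E : Mat d n → Mat d n) : ℝ :=
  ⨆ m : ℕ, ⨆ p : Fin m → ℝ, ⨆ ρs : Fin m → Mat d n,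
    ⨆ _ : (∀ i, 0 ≤ p i) ∧ ∑ i, p i = 1 ∧ ∀ i, IsState d n (ρs i),
      (vnEnt (∑ i, (p i : ℂ) • E (ρs i)) - ∑ i, p i * vnEnt (E (ρs i)))

/-- Hilbert–Schmidt norm `‖A‖₂ = (Tr[A†A])^{1/2}`. -/
noncomputable def hsNorm {d n : ℕ} [Fact (Nat.Prime d)] (A : Mat d n) : ℝ :=
  Real.sqrt ((Aᴴ * A).trace.re)

/-- Trace norm `‖A‖₁ = Tr[(A†A)^{1/2}]`. -/
noncomputable def trNorm {d n : ℕ} [Fact (Nat.Prime d)] (A : Mat d n) : ℝ :=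
  (matRpow (Aᴴ * A) (2⁻¹ : ℝ)).trace.re

/-- Tensor product of an `n₁`-qudit operator with an `n₂`-qudit operator,
as an `(n₁+n₂)`-qudit operator. -/
def tensorMat (d n₁ n₂ : ℕ) (ρ₁ : Mat d n₁) (ρ₂ : Mat d n₂) : Mat d (n₁ + n₂) :=
  Matrix.of fun v w =>
    ρ₁ (fun i => v (Fin.castAdd n₂ i)) (fun i => w (Fin.castAdd n₂ i)) *
    ρ₂ (fun j => v (Fin.natAdd n₁ j)) (fun j => w (Fin.natAdd n₁ j))

/-! ### Qubit (`d = 2`) specific definitions -/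

/-- The `n`-qubit Weyl (Pauli) operator `w(p,q) = ⊗_i i^{-p_i q_i} Z^{p_i} X^{q_i}`. -/
noncomputable def weyl2 (n : ℕ) (p q : Fin n → ZMod 2) :
    Matrix (Fin n → ZMod 2) (Fin n → ZMod 2) ℂ :=
  Matrix.of fun k' k =>
    if k' = k + q then
      ∏ i, ((-Complex.I) ^ ((p i).val * (q i).val) *
        (-1 : ℂ) ^ ((p i * (k i + q i)).val))
    else 0

/-- The `n`-qubit characteristic function `Ξ_ρ(p,q) = Tr[ρ w(p,q)†]`. -/
noncomputable def xi2 (n : ℕ) (ρ : Matrix (Fin n → ZMod 2) (Fin n → ZMod 2) ℂ)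
    (pq : (Fin n → ZMod 2) × (Fin n → ZMod 2)) : ℂ :=
  (ρ * (weyl2 n pq.1 pq.2)ᴴ).trace

/-- The logarithmic magic gap
`LMG(ρ) = -log₂ max{|Ξ_ρ(p,q)| : Ξ_ρ(p,q) ≠ 0, |Ξ_ρ(p,q)| ≠ 1}` (`0` if the set is
empty). -/
noncomputable def lmg (n : ℕ) (ρ : Matrix (Fin n → ZMod 2) (Fin n → ZMod 2) ℂ) : ℝ :=
  let s : Finset ℝ :=
    (Finset.univ.filter fun pq : (Fin n → ZMod 2) × (Fin n → ZMod 2) =>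
      xi2 n ρ pq ≠ 0 ∧ ‖xi2 n ρ pq‖ ≠ 1).image
      fun pq => ‖xi2 n ρ pq‖
  if h : s.Nonempty then -Real.logb 2 (s.max' h) else 0

/-- `U` is an `n`-qubit Clifford unitary. -/
noncomputable def IsClifford2 (n : ℕ) (U : Matrix (Fin n → ZMod 2) (Fin n → ZMod 2) ℂ) :
    Prop :=
  U ∈ Matrix.unitaryGroup (Fin n → ZMod 2) ℂ ∧
    ∀ pq : (Fin n → ZMod 2) × (Fin n → ZMod 2),
      ∃ (c : ℂ) (pq' : (Fin n → ZMod 2) × (Fin n → ZMod 2)),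
        ‖c‖ = 1 ∧ U * weyl2 n pq.1 pq.2 * Uᴴ = c • weyl2 n pq'.1 pq'.2

/-- The T gate `diag(1, e^{iπ/4})` acting on qubit `k` of an `n`-qubit system. -/
noncomputable def tGateAt (n : ℕ) (k : Fin n) :
    Matrix (Fin n → ZMod 2) (Fin n → ZMod 2) ℂ :=
  embedAt 2 n k (Matrix.of fun a b =>
    if a = b then (if a = 0 then 1 else Complex.exp (Real.pi * Complex.I / 4)) else 0)

/-- An `n`-qubit state: positive semidefinite with trace one. -/
def IsState2 (n : ℕ) (ρ : Matrix (Fin n → ZMod 2) (Fin n → ZMod 2) ℂ) : Prop :=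
  ρ.PosSemidef ∧ ρ.trace = 1

end PaperQI

namespace PaperQI

/-!
The Weyl operators `w(a)`, `a = (p, q)`, multiply up to a phase given by the symplectic form `ω`,
and `Tr[w(a) w(-b)] = dⁿ` if `a = b` and `0` otherwise; so they form a basis, and
`ρ = d⁻ⁿ ∑ₐ Ξ_ρ(a) w(a)`.

If `|Ξ_ρ(a)| = 1`, then equality in the Cauchy–Schwarz inequality forces `w(-a) ρ = Ξ_ρ(a) ρ`.
Comparing `w(-a) w(-b) ρ` with `w(-b) w(-a) ρ` and with `w(-a - b) ρ` shows that the points where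
`|Ξ_ρ| = 1` form an isotropic subspace `G`, and that `Ξ_ρ` is an additive character of `G`,
hence of the form `a ↦ ξ ^ f(a)` with `f` linear. Expanding the product over a basis of `G` turns
the defining formula of a minimal stabilizer-projection state into `d⁻ⁿ ∑_{a ∈ G} ξ ^ f(a) w(a)`,
so the mean state of any state is of this type. A vanishing magic gap says that `Ξ_ρ` vanishes off
`G`, that is, that `ρ` is its own mean state.
-/

section LinearAlgebra

theorem linearIndependent_iff_natCard_closure {p : ℕ} [Fact p.Prime] {M ι : Type*}
    [AddCommGroup M] [Module (ZMod p) M] [Fintype ι] {v : ι → M} :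
    LinearIndependent (ZMod p) v ↔
      Nat.card (AddSubgroup.closure (Set.range v)) = p ^ Fintype.card ι := by
  have hclosure : AddSubgroup.closure (Set.range v) =
      (Submodule.span (ZMod p) (Set.range v)).toAddSubgroup := by
    apply le_antisymm ((AddSubgroup.closure_le _).2 Submodule.subset_span)
    have : Submodule.span (ZMod p) (Set.range v) ≤
        AddSubgroup.toZModSubmodule p (AddSubgroup.closure (Set.range v)) :=
      Submodule.span_le.2 AddSubgroup.subset_closure
    exact this
  have hcard : Nat.card (AddSubgroup.closure (Set.range v)) =
      p ^ (Set.range v).finrank (ZMod p) := by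
    have : Module.Finite (ZMod p) (Submodule.span (ZMod p) (Set.range v)) :=
      Module.Finite.span_of_finite _ (Set.finite_range v)
    rw [hclosure]
    have := Module.natCard_eq_pow_finrank (K := ZMod p)
      (V := Submodule.span (ZMod p) (Set.range v))
    rwa [Nat.card_zmod] at this
  rw [linearIndependent_iff_card_eq_finrank_span, hcard,
    Nat.pow_right_inj (Fact.out : p.Prime).two_le, eq_comm]

theorem exists_linearMap_apply_eq {K V W ι : Type*} [Field K] [AddCommGroup V] [Module K V]
    [AddCommGroup W] [Module K W] {v : ι → V} (hv : LinearIndependent K v) (x : ι → W) :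
    ∃ f : V →ₗ[K] W, ∀ i, f (v i) = x i := by
  obtain ⟨f, hf⟩ := ((Module.Basis.span hv).constr K x).exists_extend
  refine ⟨f, fun i => ?_⟩
  have := LinearMap.congr_fun hf (Module.Basis.span hv i)
  rwa [Module.Basis.constr_basis, LinearMap.comp_apply, Submodule.subtype_apply,
    Module.Basis.span_apply] at this

theorem apply_eq_zero_of_mem_span {R M ι : Type*} [CommRing R] [AddCommGroup M] [Module R M]
    {B : LinearMap.BilinForm R M} {v : ι → M} (hv : ∀ i j, B (v i) (v j) = 0) :
    ∀ a ∈ Submodule.span R (Set.range v), ∀ b ∈ Submodule.span R (Set.range v), B a b = 0 :=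
  fun a ha b hb => LinearMap.BilinMap.apply_apply_mem_of_mem_span ⊥ (Set.range v) (Set.range v) B
    (by rintro _ ⟨i, rfl⟩ _ ⟨j, rfl⟩; exact hv i j) a b ha hb

theorem two_mul_finrank_le_of_isotropic {K V : Type*} [Field K] [AddCommGroup V] [Module K V]
    [FiniteDimensional K V] {B : LinearMap.BilinForm K V} (hB : B.Nondegenerate)
    {G : Submodule K V} (hG : ∀ a ∈ G, ∀ b ∈ G, B a b = 0) :
    2 * Module.finrank K G ≤ Module.finrank K V := by
  have hle : G ≤ B.orthogonal G := fun a ha b hb => hG b hb a ha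
  have := Submodule.finrank_mono hle
  rw [LinearMap.BilinForm.finrank_orthogonal hB] at this
  have := Submodule.finrank_le G
  lia

/-- The standard symplectic form `ω((p, q), (p', q')) = p · q' - p' · q`. -/
def symplecticForm (R ι : Type*) [CommRing R] [Fintype ι] :
    LinearMap.BilinForm R ((ι → R) × (ι → R)) :=
  (dotProductBilin R R).compl₁₂ (LinearMap.fst R _ _) (LinearMap.snd R _ _) -
    (dotProductBilin R R).flip.compl₁₂ (LinearMap.snd R _ _) (LinearMap.fst R _ _)

section SymplecticForm

variable {R ι : Type*} [CommRing R] [Fintype ι]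

theorem symplecticForm_apply (a b : (ι → R) × (ι → R)) :
    symplecticForm R ι a b = a.1 ⬝ᵥ b.2 - b.1 ⬝ᵥ a.2 := rfl

theorem symplecticForm_isAlt : LinearMap.IsAlt (symplecticForm R ι) := fun _ => sub_self _

theorem symplecticForm_nondegenerate : (symplecticForm R ι).Nondegenerate := by
  refine symplecticForm_isAlt.isRefl.nondegenerate_iff_separatingLeft.2 fun a ha => ?_
  refine Prod.ext (dotProduct_eq_zero _ fun q => ?_) (dotProduct_eq_zero _ fun p => ?_)
  · simpa [symplecticForm_apply] using ha (0, q)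
  · simpa [symplecticForm_apply, dotProduct_comm] using ha (p, 0)

theorem exists_symplecticForm_ne_zero {a : (ι → R) × (ι → R)} (ha : a ≠ 0) :
    ∃ b, symplecticForm R ι b a ≠ 0 := by
  by_contra! h
  exact ha (symplecticForm_nondegenerate.2 a h)

end SymplecticForm

end LinearAlgebra

section Characters

open ZMod (stdAddChar)

variable {d : ℕ} [NeZero d]

theorem ch_eq_stdAddChar (z : ZMod d) : ch d z = stdAddChar z := by
  rw [ZMod.stdAddChar_apply, ZMod.toCircle_apply, ch]

theorem stdAddChar_eq_one_iff {z : ZMod d} : stdAddChar z = 1 ↔ z = 0 := by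
  rw [← AddChar.map_zero_eq_one (stdAddChar (N := d)), ZMod.injective_stdAddChar.eq_iff]

theorem exists_stdAddChar_eq {c : ℂ} (hc : c ^ d = 1) : ∃ z : ZMod d, stdAddChar z = c := by
  obtain ⟨k, -, hk⟩ := (Complex.isPrimitiveRoot_exp d (NeZero.ne d)).eq_pow_of_pow_eq_one hc
  refine ⟨k, ?_⟩
  rw [← hk, ← nsmul_one, AddChar.map_nsmul_eq_pow]
  simpa using congrArg (· ^ k) (ZMod.stdAddChar_coe (N := d) 1)

theorem exists_linearMap_stdAddChar_eq {M : Type*} [AddCommGroup M] [Module (ZMod d) M]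
    (χ : AddChar M ℂ) : ∃ f : M →ₗ[ZMod d] ZMod d, ∀ a, stdAddChar (f a) = χ a := by
  have hroot (a : M) : χ a ^ d = 1 := by
    rw [← AddChar.map_nsmul_eq_pow, ← Nat.cast_smul_eq_nsmul (ZMod d), ZMod.natCast_self,
      zero_smul, AddChar.map_zero_eq_one]
  choose f hf using fun a => exists_stdAddChar_eq (hroot a)
  refine ⟨(AddMonoidHom.mk' f fun a b => ZMod.injective_stdAddChar ?_).toZModLinearMap d, hf⟩
  rw [AddChar.map_add_eq_mul, hf, hf, hf, AddChar.map_add_eq_mul]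

end Characters

section EigenOperators

variable {m : Type*} [Fintype m] {𝕜 : Type*} [RCLike 𝕜]

open scoped MatrixOrder in
theorem mul_eq_zero_of_trace_mul_mul_conjTranspose_eq_zero {ρ A : Matrix m m 𝕜}
    (hρ : ρ.PosSemidef) (h : (A * ρ * Aᴴ).trace = 0) : A * ρ = 0 := by
  obtain ⟨B, rfl⟩ := CStarAlgebra.nonneg_iff_eq_star_mul_self.mp hρ.nonneg
  rw [star_eq_conjTranspose] at *
  have hBA : A * Bᴴ = 0 := by
    rw [← trace_mul_conjTranspose_self_eq_zero_iff, conjTranspose_mul, conjTranspose_conjTranspose]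
    simpa only [Matrix.mul_assoc] using h
  rw [← Matrix.mul_assoc, hBA, Matrix.zero_mul]

/-- Equality case of the Cauchy–Schwarz inequality `|Tr[ρ U]| ≤ Tr ρ`: with `c = Tr[ρ U]`, the
trace of `(U - c) ρ (U - c)ᴴ` is `1 - |c|² = 0`. -/
theorem mul_eq_trace_smul_of_norm_trace_eq_one [DecidableEq m] {ρ U : Matrix m m 𝕜}
    (hρ : ρ.PosSemidef) (htr : ρ.trace = 1) (hU : Uᴴ * U = 1) (hc : ‖(ρ * U).trace‖ = 1) :
    U * ρ = (ρ * U).trace • ρ := by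
  set c := (ρ * U).trace with hc_def
  have hcc : star c * c = 1 := by
    simpa [hc] using RCLike.conj_mul c
  have htr_star : (ρ * Uᴴ).trace = star c := by
    rw [hc_def, ← trace_conjTranspose, conjTranspose_mul, hρ.1.eq, trace_mul_comm]
  have hexpand : (U - c • 1)ᴴ * (U - c • 1) =
      (1 + star c * c) • (1 : Matrix m m 𝕜) - c • Uᴴ - star c • U := by
    simp only [conjTranspose_sub, conjTranspose_smul, conjTranspose_one, sub_mul, mul_sub, hU,
      smul_mul_assoc, mul_smul_comm, one_mul, mul_one]
    module
  have hzero : (U - c • 1) * ρ = 0 := by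
    apply mul_eq_zero_of_trace_mul_mul_conjTranspose_eq_zero hρ
    rw [Matrix.mul_assoc, trace_mul_comm, Matrix.mul_assoc, hexpand]
    simp only [mul_sub, trace_sub, mul_smul_comm, trace_smul, mul_one, htr_star, ← hc_def, htr,
      smul_eq_mul]
    linear_combination (-1 : 𝕜) * hcc
  rwa [sub_mul, smul_mul_assoc, one_mul, sub_eq_zero] at hzero

end EigenOperators

section Qudits

open ZMod (stdAddChar)

variable {d n : ℕ} [Fact (Nat.Prime d)]

/-- The discrete phase space `Vⁿ = ℤ_dⁿ × ℤ_dⁿ`, whose points label the Weyl operators. -/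
abbrev PhaseSpace (d n : ℕ) := QV d n × QV d n

local notation "ω" => symplecticForm (ZMod _) (Fin _)

section WeylOperators

/-- The Weyl operator `w(a)` at a point `a = (p, q)` of phase space: `weyl` with its two labels
bundled, so that the addition of phase space applies to them. -/
noncomputable def weylOp (a : PhaseSpace d n) : Mat d n := weyl d n a.1 a.2

theorem weylOp_apply (a : PhaseSpace d n) (k' k : QV d n) :
    weylOp a k' k =
      if k' = k + a.2 then stdAddChar (a.1 ⬝ᵥ k + 2⁻¹ * (a.1 ⬝ᵥ a.2)) else 0 := by
  rw [← ch_eq_stdAddChar]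
  rfl

theorem xi_eq_trace_mul_weylOp (ρ : Mat d n) (a : PhaseSpace d n) :
    xi d n ρ a = (ρ * weylOp (-a)).trace := rfl

theorem weylOp_zero : weylOp (0 : PhaseSpace d n) = 1 := by
  ext k' k
  simp [weylOp_apply, Matrix.one_apply]

theorem two_ne_zero_of_odd (hd : Odd d) : (2 : ZMod d) ≠ 0 := by
  refine Ring.two_ne_zero ?_
  rw [ZMod.ringChar_zmod_n]
  rintro rfl
  exact Nat.not_odd_iff_even.2 even_two hd

theorem weylOp_mul (hd : Odd d) (a b : PhaseSpace d n) :
    weylOp a * weylOp b = stdAddChar (2⁻¹ * ω a b) • weylOp (a + b) := by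
  have h2 : (2 : ZMod d)⁻¹ * 2 = 1 := inv_mul_cancel₀ (two_ne_zero_of_odd hd)
  ext k' k
  rw [Matrix.mul_apply, Finset.sum_eq_single (k + b.2) (fun j _ hj => by simp [weylOp_apply, hj])
    (fun h => absurd (Finset.mem_univ _) h)]
  simp only [weylOp_apply, if_true, Matrix.smul_apply, Prod.fst_add, Prod.snd_add, smul_eq_mul,
    add_comm a.2 b.2, ← add_assoc, ite_mul, mul_ite, zero_mul, mul_zero]
  refine if_congr Iff.rfl ?_ rfl
  rw [← AddChar.map_add_eq_mul, ← AddChar.map_add_eq_mul]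
  congr 1
  simp only [symplecticForm_apply, add_dotProduct, dotProduct_add]
  linear_combination (-(a.1 ⬝ᵥ b.2)) * h2

theorem weylOp_mul_of_symplecticForm_eq_zero (hd : Odd d) {a b : PhaseSpace d n}
    (h : ω a b = 0) : weylOp a * weylOp b = weylOp (a + b) := by
  rw [weylOp_mul hd, h, mul_zero, AddChar.map_zero_eq_one, one_smul]

theorem weylOp_neg_mul_self (hd : Odd d) (a : PhaseSpace d n) : weylOp (-a) * weylOp a = 1 := by
  rw [weylOp_mul_of_symplecticForm_eq_zero hd (by simp [symplecticForm_isAlt a]),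
    neg_add_cancel, weylOp_zero]

theorem weylOp_mul_comm (hd : Odd d) (a b : PhaseSpace d n) :
    weylOp a * weylOp b = stdAddChar (ω a b) • (weylOp b * weylOp a) := by
  have h2 : (2 : ZMod d)⁻¹ * 2 = 1 := inv_mul_cancel₀ (two_ne_zero_of_odd hd)
  rw [weylOp_mul hd, weylOp_mul hd, smul_smul, ← AddChar.map_add_eq_mul, add_comm b]
  congr 2
  simp only [symplecticForm_apply]
  linear_combination (a.1 ⬝ᵥ b.2 - b.1 ⬝ᵥ a.2) * h2

theorem isUnit_weylOp (hd : Odd d) (a : PhaseSpace d n) : IsUnit (weylOp a) :=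
  IsUnit.of_mul_eq_one_right _ (weylOp_neg_mul_self hd a)

theorem symplecticForm_eq_zero_of_mul_mul_eq (hd : Odd d) {a b : PhaseSpace d n} {M : Mat d n}
    (hM : M ≠ 0) (h : weylOp a * (weylOp b * M) = weylOp b * (weylOp a * M)) : ω a b = 0 := by
  have hne : weylOp b * (weylOp a * M) ≠ 0 := by
    rwa [Ne, (isUnit_weylOp hd b).mul_right_eq_zero, (isUnit_weylOp hd a).mul_right_eq_zero]
  rw [← Matrix.mul_assoc, weylOp_mul_comm hd, smul_mul_assoc, Matrix.mul_assoc] at h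
  rw [← stdAddChar_eq_one_iff]
  exact smul_left_injective ℂ hne (h.trans (one_smul ℂ _).symm)

theorem commute_weylOp_iff (hd : Odd d) {a b : PhaseSpace d n} :
    Commute (weylOp a) (weylOp b) ↔ ω a b = 0 := by
  refine ⟨fun h => ?_, fun h => ?_⟩
  · exact symplecticForm_eq_zero_of_mul_mul_eq hd one_ne_zero (by simpa using h.eq)
  · rw [Commute, SemiconjBy, weylOp_mul_comm hd, h, AddChar.map_zero_eq_one, one_smul]

theorem weylOp_pow (hd : Odd d) (a : PhaseSpace d n) (k : ℕ) :
    weylOp a ^ k = weylOp ((k : ZMod d) • a) := by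
  induction k with
  | zero => simp [weylOp_zero]
  | succ k ih =>
    rw [pow_succ, ih, weylOp_mul_of_symplecticForm_eq_zero hd (by simp [symplecticForm_isAlt a]),
      Nat.cast_succ, add_smul, one_smul]

theorem conjTranspose_weylOp (hd : Odd d) (a : PhaseSpace d n) : (weylOp a)ᴴ = weylOp (-a) := by
  have h2 : (2 : ZMod d)⁻¹ * 2 = 1 := inv_mul_cancel₀ (two_ne_zero_of_odd hd)
  ext k' k
  simp only [conjTranspose_apply, weylOp_apply, Prod.fst_neg, Prod.snd_neg, ← sub_eq_add_neg,
    eq_sub_iff_add_eq, eq_comm (a := k)]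
  split_ifs with h
  · rw [← h, RCLike.star_def, ← AddChar.map_neg_eq_conj]
    congr 1
    simp only [neg_dotProduct, dotProduct_add, dotProduct_neg]
    linear_combination (-(a.1 ⬝ᵥ a.2)) * h2
  · exact star_zero ℂ

theorem trace_weylOp (hd : Odd d) (a : PhaseSpace d n) :
    (weylOp a).trace = if a = 0 then (d : ℂ) ^ n else 0 := by
  split_ifs with ha
  · simp [ha, weylOp_zero]
  · obtain ⟨b, hb⟩ := exists_symplecticForm_ne_zero ha
    have hconj : (weylOp a).trace = stdAddChar (ω b a) * (weylOp a).trace := calc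
      (weylOp a).trace = (weylOp (-b) * (weylOp b * weylOp a)).trace := by
        rw [← Matrix.mul_assoc, weylOp_neg_mul_self hd, Matrix.one_mul]
      _ = stdAddChar (ω b a) * (weylOp (-b) * (weylOp a * weylOp b)).trace := by
        rw [weylOp_mul_comm hd b a, mul_smul_comm, trace_smul, smul_eq_mul]
      _ = stdAddChar (ω b a) * (weylOp a).trace := by
        rw [trace_mul_comm, Matrix.mul_assoc, mul_eq_one_comm.1 (weylOp_neg_mul_self hd b),
          Matrix.mul_one]
    by_contra h
    exact hb (stdAddChar_eq_one_iff.1 ((mul_eq_right₀ h).1 hconj.symm))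

theorem trace_weylOp_mul_weylOp_neg (hd : Odd d) (a b : PhaseSpace d n) :
    (weylOp a * weylOp (-b)).trace = if a = b then (d : ℂ) ^ n else 0 := by
  rw [weylOp_mul hd, trace_smul, trace_weylOp hd, ← sub_eq_add_neg, smul_eq_mul]
  simp only [sub_eq_zero]
  split_ifs with h
  · simp [h, symplecticForm_isAlt b]
  · exact mul_zero _

/-- The inverse Weyl transform `d⁻ⁿ ∑ₐ c(a) w(a)`: the operator with characteristic function `c`. -/
noncomputable def ofCharFun (c : PhaseSpace d n → ℂ) : Mat d n :=
  ((d : ℂ) ^ n)⁻¹ • ∑ a, c a • weylOp a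

theorem xi_ofCharFun (hd : Odd d) (c : PhaseSpace d n → ℂ) : xi d n (ofCharFun c) = c := by
  ext a
  rw [xi_eq_trace_mul_weylOp, ofCharFun, smul_mul_assoc, Finset.sum_mul, trace_smul, trace_sum]
  simp only [smul_mul_assoc, trace_smul, trace_weylOp_mul_weylOp_neg hd, smul_eq_mul, mul_ite,
    mul_zero, Finset.sum_ite_eq', Finset.mem_univ, if_true]
  rw [mul_comm, mul_inv_cancel_right₀ (pow_ne_zero n (NeZero.ne _))]

/-- The inverse Weyl transform is injective between spaces of the same dimension `d²ⁿ`, so its left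
inverse `Ξ` is also a right inverse. -/
theorem ofCharFun_xi (hd : Odd d) (ρ : Mat d n) : ofCharFun (xi d n ρ) = ρ := by
  let T : (PhaseSpace d n → ℂ) →ₗ[ℂ] Mat d n :=
    ((d : ℂ) ^ n)⁻¹ • Fintype.linearCombination ℂ weylOp
  have hT (c : PhaseSpace d n → ℂ) : T c = ofCharFun c := by
    simp [T, ofCharFun, Fintype.linearCombination_apply]
  have hinj : Function.Injective T := fun c c' h => by
    rw [← xi_ofCharFun hd c, ← hT, h, hT, xi_ofCharFun hd]
  have hsurj : Function.Surjective T := by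
    refine (LinearMap.injective_iff_surjective_of_finrank_eq_finrank ?_).1 hinj
    simp [Module.finrank_matrix]
  obtain ⟨c, rfl⟩ := hsurj ρ
  rw [hT, xi_ofCharFun hd]

end WeylOperators

section StabilizerStates

/-- The operator with characteristic function `a ↦ ξ ^ f(a)` on the subspace `G` and `0` off it. For
isotropic `G` it is the normalized projection onto a joint eigenspace of the `w(a)`, `a ∈ G`. The
functional `f` lives on the whole phase space for convenience; only its restriction to `G`
matters. -/
noncomputable def stabilizerState (G : Submodule (ZMod d) (PhaseSpace d n))
    (f : PhaseSpace d n →ₗ[ZMod d] ZMod d) : Mat d n :=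
  ofCharFun fun a => if a ∈ G then stdAddChar (f a) else 0

/-- The projection `d⁻¹ ∑ₖ (ξˣ w(a))ᵏ` onto the eigenspace of `w(a)` with eigenvalue `ξ⁻ˣ`, as it
appears in `IsMSPS`. -/
noncomputable def stabilizerProj (a : PhaseSpace d n) (x : ZMod d) : Mat d n :=
  (d : ℂ)⁻¹ • ∑ k : ZMod d, (ch d x • weyl d n a.1 a.2) ^ k.val

theorem stabilizerProj_apply_eq_sum (hd : Odd d) (a : PhaseSpace d n)
    (f : PhaseSpace d n →ₗ[ZMod d] ZMod d) :
    stabilizerProj a (f a) =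
      (d : ℂ)⁻¹ • ∑ k : ZMod d, stdAddChar (f (k • a)) • weylOp (k • a) := by
  rw [stabilizerProj]
  congr! 2 with k
  rw [ch_eq_stdAddChar, ← weylOp, smul_pow, weylOp_pow hd, ← AddChar.map_nsmul_eq_pow,
    ← Nat.cast_smul_eq_nsmul (ZMod d), ZMod.natCast_zmod_val, ← map_smul f]

theorem prod_stabilizerProj (hd : Odd d) (f : PhaseSpace d n →ₗ[ZMod d] ZMod d) {r : ℕ}
    (v : Fin r → PhaseSpace d n) (hv : ∀ i j, ω (v i) (v j) = 0) :
    (List.ofFn fun i => stabilizerProj (v i) (f (v i))).prod =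
      ((d : ℂ) ^ r)⁻¹ • ∑ k : Fin r → ZMod d,
        stdAddChar (f (∑ i, k i • v i)) • weylOp (∑ i, k i • v i) := by
  induction r with
  | zero => simp [weylOp_zero]
  | succ r ih =>
    rw [List.ofFn_succ, List.prod_cons, ih (fun i => v i.succ) fun i j => hv _ _,
      stabilizerProj_apply_eq_sum hd, smul_mul_smul_comm, ← mul_inv, ← pow_succ',
      Finset.sum_mul_sum, ← (Fin.consEquiv fun _ => ZMod d).sum_comp, Fintype.sum_prod_type]
    congr! 3 with k - l -
    have hω : ω (k • v 0) (∑ i, l i • v i.succ) = 0 := by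
      simp [map_sum, hv]
    rw [smul_mul_smul_comm, ← AddChar.map_add_eq_mul, ← map_add,
      weylOp_mul_of_symplecticForm_eq_zero hd hω]
    simp [Fin.consEquiv, Fin.sum_univ_succ]

theorem stabilizerState_span (hd : Odd d) (f : PhaseSpace d n →ₗ[ZMod d] ZMod d) {r : ℕ}
    (hr : r ≤ n) {v : Fin r → PhaseSpace d n} (hv : LinearIndependent (ZMod d) v)
    (hω : ∀ i j, ω (v i) (v j) = 0) :
    stabilizerState (Submodule.span (ZMod d) (Set.range v)) f =
      ((d : ℂ) ^ (n - r))⁻¹ • (List.ofFn fun i => stabilizerProj (v i) (f (v i))).prod := by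
  rw [prod_stabilizerProj hd f v hω, smul_smul, ← mul_inv, ← pow_add, Nat.sub_add_cancel hr,
    stabilizerState, ofCharFun]
  congr 1
  symm
  refine Finset.sum_of_injOn (fun k => ∑ i, k i • v i)
    hv.fintypeLinearCombination_injective.injOn (by simp) (fun a _ ha => ?_)
    fun k _ => ?_
  · rw [if_neg, zero_smul]
    contrapose! ha
    simpa [Submodule.mem_span_range_iff_exists_fun] using ha
  · rw [if_pos (Submodule.sum_smul_mem _ _ fun i _ => Submodule.subset_span (Set.mem_range_self i))]

theorem isMSPS_iff_exists_stabilizerState (hd : Odd d) {ρ : Mat d n} :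
    IsMSPS d n ρ ↔ ∃ (G : Submodule (ZMod d) (PhaseSpace d n))
      (f : PhaseSpace d n →ₗ[ZMod d] ZMod d),
      (∀ a ∈ G, ∀ b ∈ G, ω a b = 0) ∧ ρ = stabilizerState G f := by
  constructor
  · rintro ⟨r, hr, p, q, x, hcomm, hcard, rfl⟩
    set v : Fin r → PhaseSpace d n := fun i => (p i, q i)
    have hv : LinearIndependent (ZMod d) v :=
      linearIndependent_iff_natCard_closure.2 (by rwa [Fintype.card_fin])
    have hω (i j : Fin r) : ω (v i) (v j) = 0 := (commute_weylOp_iff hd).1 (hcomm i j)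
    obtain ⟨f, hf⟩ := exists_linearMap_apply_eq hv x
    refine ⟨_, f, apply_eq_zero_of_mem_span hω, ?_⟩
    rw [stabilizerState_span hd f hr hv hω]
    simp only [hf]
    rfl
  · rintro ⟨G, f, hG, rfl⟩
    obtain ⟨r, v, hv, rfl⟩ : ∃ (r : ℕ) (v : Fin r → PhaseSpace d n),
        LinearIndependent (ZMod d) v ∧ Submodule.span (ZMod d) (Set.range v) = G :=
      let ⟨v, _, hspan, hv⟩ := Submodule.exists_fun_fin_finrank_span_eq (ZMod d) (G : Set _)
      ⟨_, v, hv, hspan.trans G.span_eq⟩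
    have hω (i j : Fin r) : ω (v i) (v j) = 0 :=
      hG _ (Submodule.subset_span (Set.mem_range_self i)) _
        (Submodule.subset_span (Set.mem_range_self j))
    have hr : r ≤ n := by
      have := two_mul_finrank_le_of_isotropic symplecticForm_nondegenerate hG
      rw [finrank_span_eq_card hv, Fintype.card_fin, Module.finrank_prod,
        Module.finrank_fin_fun] at this
      lia
    refine ⟨r, hr, fun i => (v i).1, fun i => (v i).2, fun i => f (v i),
      fun i j => (commute_weylOp_iff hd).2 (hω i j), ?_, stabilizerState_span hd f hr hv hω⟩
    exact (linearIndependent_iff_natCard_closure.1 hv).trans (by rw [Fintype.card_fin])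

end StabilizerStates

section CharacteristicFunction

variable {ρ : Mat d n}

theorem xi_zero (ρ : Mat d n) : xi d n ρ 0 = ρ.trace := by
  rw [xi_eq_trace_mul_weylOp, neg_zero, weylOp_zero, Matrix.mul_one]

theorem xi_neg (hd : Odd d) (hρ : ρ.IsHermitian) (a : PhaseSpace d n) :
    xi d n ρ (-a) = star (xi d n ρ a) := by
  rw [xi_eq_trace_mul_weylOp, xi_eq_trace_mul_weylOp, ← trace_conjTranspose, conjTranspose_mul,
    conjTranspose_weylOp hd, hρ.eq, trace_mul_comm]

theorem weylOp_neg_mul_of_norm_xi_eq_one (hd : Odd d) (hρ : IsState d n ρ) {a : PhaseSpace d n}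
    (ha : ‖xi d n ρ a‖ = 1) : weylOp (-a) * ρ = xi d n ρ a • ρ := by
  refine mul_eq_trace_smul_of_norm_trace_eq_one hρ.1 hρ.2 ?_ ha
  rw [conjTranspose_weylOp hd, weylOp_neg_mul_self hd]

theorem symplecticForm_eq_zero_of_norm_xi_eq_one (hd : Odd d) (hρ : IsState d n ρ)
    {a b : PhaseSpace d n} (ha : ‖xi d n ρ a‖ = 1) (hb : ‖xi d n ρ b‖ = 1) : ω a b = 0 := by
  have hρ0 : ρ ≠ 0 := by
    rintro rfl
    simpa using hρ.2
  have : ω (-a) (-b) = 0 := by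
    refine symplecticForm_eq_zero_of_mul_mul_eq hd hρ0 ?_
    simp only [weylOp_neg_mul_of_norm_xi_eq_one hd hρ ha, weylOp_neg_mul_of_norm_xi_eq_one hd hρ hb,
      mul_smul_comm, smul_smul, mul_comm (xi d n ρ a)]
  simpa using this

theorem xi_add (hd : Odd d) (hρ : IsState d n ρ) {a b : PhaseSpace d n}
    (ha : ‖xi d n ρ a‖ = 1) (hb : ‖xi d n ρ b‖ = 1) :
    xi d n ρ (a + b) = xi d n ρ a * xi d n ρ b := by
  have hω : ω (-a) (-b) = 0 := by
    simpa using symplecticForm_eq_zero_of_norm_xi_eq_one hd hρ ha hb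
  rw [xi_eq_trace_mul_weylOp, neg_add, ← weylOp_mul_of_symplecticForm_eq_zero hd hω,
    trace_mul_comm, Matrix.mul_assoc, weylOp_neg_mul_of_norm_xi_eq_one hd hρ hb, mul_smul_comm,
    weylOp_neg_mul_of_norm_xi_eq_one hd hρ ha, smul_smul, trace_smul, hρ.2, smul_eq_mul, mul_one,
    mul_comm]

/-- The phase-space points where the characteristic function of a state has modulus `1`. Over the
prime field `ℤ_d`, closure under addition makes them a subspace. -/
def unitModulusSubmodule (hd : Odd d) (hρ : IsState d n ρ) :
    Submodule (ZMod d) (PhaseSpace d n) :=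
  AddSubgroup.toZModSubmodule d
    { carrier := {a | ‖xi d n ρ a‖ = 1}
      zero_mem' := by simp [xi_zero, hρ.2]
      add_mem' := fun {a b} ha hb => by
        rw [Set.mem_ofPred_eq] at *
        rw [xi_add hd hρ ha hb, norm_mul, ha, hb, one_mul]
      neg_mem' := fun {a} ha => by
        rw [Set.mem_ofPred_eq] at *
        rw [xi_neg hd hρ.1.1, norm_star, ha] }

theorem mem_unitModulusSubmodule {hd : Odd d} {hρ : IsState d n ρ} {a : PhaseSpace d n} :
    a ∈ unitModulusSubmodule hd hρ ↔ ‖xi d n ρ a‖ = 1 := Iff.rfl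

theorem exists_linearMap_stdAddChar_eq_xi (hd : Odd d) (hρ : IsState d n ρ) :
    ∃ f : PhaseSpace d n →ₗ[ZMod d] ZMod d,
      ∀ a, ‖xi d n ρ a‖ = 1 → stdAddChar (f a) = xi d n ρ a := by
  let χ : AddChar (unitModulusSubmodule hd hρ) ℂ :=
    { toFun := fun a => xi d n ρ a
      map_zero_eq_one' := (xi_zero ρ).trans hρ.2
      map_add_eq_mul' := fun a b => xi_add hd hρ a.2 b.2 }
  obtain ⟨g, hg⟩ := exists_linearMap_stdAddChar_eq (d := d) χ
  obtain ⟨f, rfl⟩ := g.exists_extend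
  exact ⟨f, fun a ha => hg ⟨a, ha⟩⟩

theorem meanState_eq_ofCharFun (ρ : Mat d n) :
    meanState d n ρ = ofCharFun fun a => if ‖xi d n ρ a‖ = 1 then xi d n ρ a else 0 := by
  simp only [meanState, ofCharFun, ite_smul, zero_smul, weylOp]

theorem isMSPS_meanState (hd : Odd d) (hρ : IsState d n ρ) : IsMSPS d n (meanState d n ρ) := by
  obtain ⟨f, hf⟩ := exists_linearMap_stdAddChar_eq_xi hd hρ
  refine (isMSPS_iff_exists_stabilizerState hd).2 ⟨unitModulusSubmodule hd hρ, f,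
    fun a ha b hb => symplecticForm_eq_zero_of_norm_xi_eq_one hd hρ ha hb, ?_⟩
  rw [meanState_eq_ofCharFun, stabilizerState]
  congr! 2 with a
  rw [mem_unitModulusSubmodule]
  split_ifs with ha
  exacts [(hf a ha).symm, rfl]

theorem meanState_eq_self (hd : Odd d) (h : ∀ a, xi d n ρ a ≠ 0 → ‖xi d n ρ a‖ = 1) :
    meanState d n ρ = ρ := by
  rw [meanState_eq_ofCharFun]
  conv_rhs => rw [← ofCharFun_xi hd ρ]
  congr! 2 with a
  rw [ite_eq_left_iff]
  exact fun ha => (not_imp_comm.1 (h a) ha).symm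

theorem norm_xi_eq_one_of_isMSPS (hd : Odd d) (hρ : IsMSPS d n ρ) {a : PhaseSpace d n}
    (ha : xi d n ρ a ≠ 0) : ‖xi d n ρ a‖ = 1 := by
  obtain ⟨G, f, -, rfl⟩ := (isMSPS_iff_exists_stabilizerState hd).1 hρ
  rw [stabilizerState, xi_ofCharFun hd] at ha ⊢
  rw [if_pos (by by_contra h; exact ha (if_neg h)), AddChar.norm_apply]

theorem magicGap_eq_zero_iff :
    magicGap d n ρ = 0 ↔ ∀ a, xi d n ρ a ≠ 0 → ‖xi d n ρ a‖ = 1 := by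
  simp only [magicGap]
  split_ifs with hs
  · obtain ⟨a, ha, hmax⟩ := Finset.mem_image.1 (Finset.max'_mem _ hs)
    rw [← hmax]
    obtain ⟨-, hne_zero, hne_one⟩ := Finset.mem_filter.1 ha
    exact ⟨fun h => absurd (sub_eq_zero.1 h).symm hne_one, fun h => absurd (h a hne_zero) hne_one⟩
  · simpa [Finset.filter_eq_empty_iff, Finset.not_nonempty_iff_eq_empty] using hs

end CharacteristicFunction

end Qudits

/-- For every `n`-qudit state `ρ`: `MG(ρ) = 0` iff `ρ` is a minimal
stabilizer-projection state. -/
theorem statement4 (d n : ℕ) [Fact (Nat.Prime d)] (hd : Odd d) (hn : 1 ≤ n)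
    (ρ : Mat d n) (hρ : IsState d n ρ) :
    magicGap d n ρ = 0 ↔ IsMSPS d n ρ := by
  rw [magicGap_eq_zero_iff]
  refine ⟨fun h => ?_, fun h a => norm_xi_eq_one_of_isMSPS hd h⟩
  rw [← meanState_eq_self hd h]
  exact isMSPS_meanState hd hρ

end PaperQI
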